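/- arXiv:2403.08843 — 2 statements merged into one kernel-verified Lean document; each statement's English description precedes it below -/
import Mathlib

section
/- Let ⋄ : ℝ × ℝ → ℝ be a continuous binary operation (in particular ⋄ ∈ {+, −, ·}), and let 𝗑, 𝗒 : ℝ → [0,1] be fuzzy numbers such that for every α ∈ (0,1] the α-cuts 𝗑^(α) and 𝗒^(α) are nonempty compact sets. Then for every α ∈ (0,1], the α-cut of the Zadeh extension satisfies (𝗑 ⋄̃ 𝗒)^(α) = { x ⋄ y : x ∈ 𝗑^(α), y ∈ 𝗒^(α) }. -/
open Set

/-- Zadeh extension of a binary operation on ℝ applied to fuzzy numbers. -/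
noncomputable def zadeh2 (f : ℝ → ℝ → ℝ) (x y : ℝ → ℝ) : ℝ → ℝ :=
  fun z => sSup {m : ℝ | ∃ a b : ℝ, f a b = z ∧ m = min (x a) (y b)}

/-- α-cut of a fuzzy number. -/
def cut (x : ℝ → ℝ) (α : ℝ) : Set ℝ := {t : ℝ | α ≤ x t}

theorem alpha_cut_of_zadeh_extension
    (f : ℝ → ℝ → ℝ) (hf : Continuous fun p : ℝ × ℝ => f p.1 p.2)
    (x y : ℝ → ℝ)
    (hx : ∀ t, x t ∈ Icc (0:ℝ) 1) (hy : ∀ t, y t ∈ Icc (0:ℝ) 1)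
    (hxcut : ∀ α ∈ Ioc (0:ℝ) 1, (cut x α).Nonempty ∧ IsCompact (cut x α))
    (hycut : ∀ α ∈ Ioc (0:ℝ) 1, (cut y α).Nonempty ∧ IsCompact (cut y α)) :
    ∀ α ∈ Ioc (0:ℝ) 1,
      cut (zadeh2 f x y) α = Set.image2 f (cut x α) (cut y α) := by
  intro α hα
  have hbdd : ∀ z, BddAbove {m : ℝ | ∃ a b : ℝ, f a b = z ∧ m = min (x a) (y b)} := by
    intro z
    refine ⟨1, ?_⟩
    rintro m ⟨a, b, -, rfl⟩
    exact (min_le_left _ _).trans (hx a).2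
  ext z
  constructor
  · intro hz
    have hz' : α ≤ sSup {m : ℝ | ∃ a b : ℝ, f a b = z ∧ m = min (x a) (y b)} := hz
    have hne : {m : ℝ | ∃ a b : ℝ, f a b = z ∧ m = min (x a) (y b)}.Nonempty := by
      by_contra h
      rw [Set.not_nonempty_iff_eq_empty] at h
      rw [h, Real.sSup_empty] at hz'
      linarith [hα.1]
    let β : ℕ → ℝ := fun n => α - α / ((n : ℝ) + 2)
    have hβlt : ∀ n, β n < α := by
      intro n
      have : 0 < α / ((n : ℝ) + 2) := div_pos hα.1 (by positivity)
      simp only [β]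
      linarith
    have hβpos : ∀ n, 0 < β n := by
      intro n
      have h2 : (1 : ℝ) < (n : ℝ) + 2 := by
        have : (0 : ℝ) ≤ n := Nat.cast_nonneg n
        linarith
      have : α / ((n : ℝ) + 2) < α := div_lt_self hα.1 h2
      simp only [β]
      linarith
    have hβmem : ∀ n, β n ∈ Ioc (0 : ℝ) 1 := fun n =>
      ⟨hβpos n, (hβlt n).le.trans hα.2⟩
    have hβmono : ∀ n, β n ≤ β (n + 1) := by
      intro n
      simp only [β]
      have : α / (((n + 1 : ℕ) : ℝ) + 2) ≤ α / ((n : ℝ) + 2) := by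
        apply div_le_div_of_nonneg_left hα.1.le (by positivity)
        push_cast
        linarith
      linarith
    have hβlim : Filter.Tendsto β Filter.atTop (nhds α) := by
      have h1 : Filter.Tendsto (fun n : ℕ => (n : ℝ) + 2) Filter.atTop Filter.atTop :=
        Filter.tendsto_atTop_add_const_right _ _ tendsto_natCast_atTop_atTop
      have h2 := (tendsto_const_nhds (x := α)).sub (h1.const_div_atTop α)
      simpa [β] using h2
    let K : ℕ → Set (ℝ × ℝ) := fun n =>
      (cut x (β n) ×ˢ cut y (β n)) ∩ {p | f p.1 p.2 = z}
    have hcl : IsClosed {p : ℝ × ℝ | f p.1 p.2 = z} := isClosed_eq hf continuous_const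
    have hKc : ∀ n, IsCompact (K n) := fun n =>
      ((hxcut _ (hβmem n)).2.prod (hycut _ (hβmem n)).2).inter_right hcl
    have hKne : ∀ n, (K n).Nonempty := by
      intro n
      obtain ⟨m, ⟨a, b, hab, rfl⟩, hm⟩ := exists_lt_of_lt_csSup hne ((hβlt n).trans_le hz')
      exact ⟨(a, b), ⟨(lt_min_iff.1 hm).1.le, (lt_min_iff.1 hm).2.le⟩, hab⟩
    have hKanti : ∀ n, K (n + 1) ⊆ K n := by
      rintro n p ⟨⟨h1, h2⟩, h3⟩
      exact ⟨⟨(hβmono n).trans h1, (hβmono n).trans h2⟩, h3⟩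
    obtain ⟨p, hp⟩ := IsCompact.nonempty_iInter_of_sequence_nonempty_isCompact_isClosed
      K hKanti hKne (hKc 0) (fun n => (hKc n).isClosed)
    rw [Set.mem_iInter] at hp
    exact ⟨p.1, le_of_tendsto' hβlim fun n => (hp n).1.1, p.2,
      le_of_tendsto' hβlim fun n => (hp n).1.2, (hp 0).2⟩
  · rintro ⟨a, ha, b, hb, hab⟩
    exact (le_min ha hb).trans (le_csSup (hbdd z) ⟨a, b, hab, rfl⟩)
end

section
/- Let T be a tree-structured fault tree over a finite index set I of basic events in which every basic event index occurs at most once, and let p : I → [0,1] be (crisp) failure probabilities. Define the structure function S_T : 𝔹^I → 𝔹 recursively by S_{BE(i)}(f) = fᵢ, S_{AND(T₁,T₂)}(f) = S_{T₁}(f) ∧ S_{T₂}(f), S_{OR(T₁,T₂)}(f) = S_{T₁}(f) ∨ S_{T₂}(f). Then the cut-set sum equals the bottom-up value: Σ_{f ∈ 𝔹^I, S_T(f) = 1} Π_{i ∈ I} p(i)^{fᵢ} (1 − p(i))^{1 − fᵢ} = U_T(p), where U_T is defined recursively by U_{BE(i)}(p) = p(i), U_{AND(T₁,T₂)}(p)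 = U_{T₁}(p) · U_{T₂}(p), U_{OR(T₁,T₂)}(p) = 1 − (1 − U_{T₁}(p))(1 − U_{T₂}(p)). -/
open Set

/-- Fault trees over an index set of basic events. -/
inductive FT (I : Type) : Type where
  | BE : I → FT I
  | AND : FT I → FT I → FT I
  | OR : FT I → FT I → FT I

/-- The list of basic event labels occurring in a fault tree. -/
def FT.leaves {I : Type} : FT I → List I
  | .BE i => [i]
  | .AND t₁ t₂ => t₁.leaves ++ t₂.leaves
  | .OR t₁ t₂ => t₁.leaves ++ t₂.leaves

/-- The structure function of a fault tree. -/
def structF {I : Type} : FT I → (I → Bool) → Bool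
  | .BE i => fun f => f i
  | .AND t₁ t₂ => fun f => structF t₁ f && structF t₂ f
  | .OR t₁ t₂ => fun f => structF t₁ f || structF t₂ f

/-- Crisp unreliability function of a fault tree, computed bottom-up. -/
def crispU {I : Type} : FT I → (I → ℝ) → ℝ
  | .BE i => fun p => p i
  | .AND t₁ t₂ => fun p => crispU t₁ p * crispU t₂ p
  | .OR t₁ t₂ => fun p => 1 - (1 - crispU t₁ p) * (1 - crispU t₂ p)

/-- Weight of a single coordinate. -/
def ftW {I : Type} (p : I → ℝ) (i : I) (b : Bool) : ℝ :=
  (p i) ^ (if b then 1 else 0) * (1 - p i) ^ (if b then 0 else 1)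

/-- Expectation under the product weight. -/
def ftE {I : Type} [Fintype I] [DecidableEq I] (p : I → ℝ) (g : (I → Bool) → ℝ) : ℝ :=
  ∑ f : I → Bool, (∏ i, ftW p i (f i)) * g f

/-- Real-valued indicator of the structure function. -/
def ftInd {I : Type} (T : FT I) (f : I → Bool) : ℝ := if structF T f = true then 1 else 0

/-- Swap coordinates of a pair outside a set. -/
def ftMix {I : Type} [DecidableEq I] (S : List I) (f g : I → Bool) : I → Bool :=
  fun i => if i ∈ S then f i else g i

theorem structF_congr {I : Type} (T : FT I) (f g : I → Bool)
    (h : ∀ i ∈ T.leaves, f i = g i) : structF T f = structF T g := by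
  induction T with
  | BE i => exact h i (by simp [FT.leaves])
  | AND a b iha ihb =>
    simp only [structF]
    rw [iha (fun i hi => h i (by simp [FT.leaves, hi])),
      ihb (fun i hi => h i (by simp [FT.leaves, hi]))]
  | OR a b iha ihb =>
    simp only [structF]
    rw [iha (fun i hi => h i (by simp [FT.leaves, hi])),
      ihb (fun i hi => h i (by simp [FT.leaves, hi]))]

theorem ftE_one {I : Type} [Fintype I] [DecidableEq I] (p : I → ℝ) :
    ftE p (fun _ => 1) = 1 := by
  unfold ftE
  simp only [mul_one]
  rw [← Fintype.prod_sum (fun i b => ftW p i b)]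
  simp [ftW]

theorem ftE_BE {I : Type} [Fintype I] [DecidableEq I] (p : I → ℝ) (j : I) :
    ftE p (ftInd (.BE j)) = p j := by
  unfold ftE
  have h : ∀ f : I → Bool, (∏ i, ftW p i (f i)) * ftInd (.BE j) f
      = ∏ i, (ftW p i (f i) * if i = j then (if f i = true then 1 else 0) else 1) := by
    intro f
    rw [Finset.prod_mul_distrib, Finset.prod_ite_eq' Finset.univ j]
    by_cases hj : f j = true <;> simp [ftInd, structF, hj]
  simp only [h]
  rw [← Fintype.prod_sum (fun i b => ftW p i b * if i = j then (if b = true then 1 else 0) else 1)]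
  have h2 : ∀ i, (∑ b : Bool, ftW p i b * if i = j then (if b = true then 1 else 0) else 1)
      = if i = j then p i else 1 := by
    intro i
    by_cases hij : i = j <;> simp [ftW, hij]
  simp only [h2]
  simp

theorem ftE_mul {I : Type} [Fintype I] [DecidableEq I] (p : I → ℝ) (a b : FT I)
    (hd : a.leaves.Disjoint b.leaves) :
    ftE p (fun f => ftInd a f * ftInd b f) = ftE p (ftInd a) * ftE p (ftInd b) := by
  have key : ftE p (fun f => ftInd a f * ftInd b f) * ftE p (fun _ => 1)
      = ftE p (ftInd a) * ftE p (ftInd b) := by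
    unfold ftE
    rw [Fintype.sum_mul_sum, Fintype.sum_mul_sum, ← Fintype.sum_prod_type', ← Fintype.sum_prod_type']
    let σ : (I → Bool) × (I → Bool) → (I → Bool) × (I → Bool) :=
      fun x => (ftMix a.leaves x.1 x.2, ftMix a.leaves x.2 x.1)
    have hσ : Function.Involutive σ := by
      rintro ⟨f, g⟩
      ext i <;> by_cases hi : i ∈ a.leaves <;> simp [σ, ftMix, hi]
    refine Fintype.sum_equiv hσ.toPerm _ _ ?_
    rintro ⟨f, g⟩
    have ha : ftInd a (ftMix a.leaves f g) = ftInd a f := by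
      unfold ftInd
      rw [structF_congr a (ftMix a.leaves f g) f (fun i hi => by simp [ftMix, hi])]
    have hb : ftInd b (ftMix a.leaves g f) = ftInd b f := by
      unfold ftInd
      rw [structF_congr b (ftMix a.leaves g f) f
        (fun i hi => by simp [ftMix, show i ∉ a.leaves from fun h => hd h hi])]
    have hw : (∏ i, ftW p i (ftMix a.leaves f g i)) * (∏ i, ftW p i (ftMix a.leaves g f i))
        = (∏ i, ftW p i (f i)) * (∏ i, ftW p i (g i)) := by
      rw [← Finset.prod_mul_distrib, ← Finset.prod_mul_distrib]
      refine Finset.prod_congr rfl fun i _ => ?_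
      by_cases hi : i ∈ a.leaves <;> simp [ftMix, hi, mul_comm]
    simp only [Function.Involutive.coe_toPerm, σ]
    rw [ha, hb]
    linear_combination (-(ftInd a f * ftInd b f)) * hw
  rwa [ftE_one, mul_one] at key

theorem ftE_eq {I : Type} [Fintype I] [DecidableEq I] (p : I → ℝ) (T : FT I)
    (hT : T.leaves.Nodup) : ftE p (ftInd T) = crispU T p := by
  induction T with
  | BE i => exact ftE_BE p i
  | AND a b iha ihb =>
    obtain ⟨h1, h2, h3⟩ := List.nodup_append'.1 hT
    simp only [crispU]
    rw [← iha h1, ← ihb h2, ← ftE_mul p a b h3]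
    congr 1
    funext f
    cases ha : structF a f <;> cases hb : structF b f <;> simp [ftInd, structF, ha, hb]
  | OR a b iha ihb =>
    obtain ⟨h1, h2, h3⟩ := List.nodup_append'.1 hT
    have hm := ftE_mul p a b h3
    rw [iha h1, ihb h2] at hm
    have hs : ftE p (ftInd (.OR a b))
        = ftE p (ftInd a) + ftE p (ftInd b) - ftE p (fun f => ftInd a f * ftInd b f) := by
      unfold ftE
      rw [← Finset.sum_add_distrib, ← Finset.sum_sub_distrib]
      refine Finset.sum_congr rfl fun f _ => ?_
      cases ha : structF a f <;> cases hb : structF b f <;> simp [ftInd, structF, ha, hb]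
    rw [hs, hm, iha h1, ihb h2]
    simp only [crispU]
    ring

theorem cutset_sum_eq_bottomup {I : Type} [Fintype I] [DecidableEq I]
    (T : FT I) (hT : T.leaves.Nodup)
    (p : I → ℝ) (hp : ∀ i, p i ∈ Icc (0:ℝ) 1) :
    ∑ f ∈ Finset.univ.filter (fun f : I → Bool => structF T f = true),
      ∏ i, (p i) ^ (if f i then 1 else 0) * (1 - p i) ^ (if f i then 0 else 1)
      = crispU T p := by
  rw [← ftE_eq p T hT, Finset.sum_filter]
  unfold ftE
  refine Finset.sum_congr rfl fun f _ => ?_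
  by_cases h : structF T f = true <;> simp [ftInd, ftW, h]
end
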